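/- Let S₁ = (n₁,…,n_k) and S₂ = (m₁,…,m_l) be tuples of integers at least 2 with (n_i, n_j) = 1 and (m_i, m_j) = 1 for i ≠ j. If Γ(S₁) and Γ(S₂) are quasi-isometric, then k = l. -/

import Mathlib

/-- `f : X → Y` is a `(K,C)`-quasi-isometry with respect to the distance
functions `dX`, `dY`. -/
def IsQI {X Y : Type*} (K C : ℝ) (dX : X → X → ℝ) (dY : Y → Y → ℝ)
    (f : X → Y) : Prop :=
  (∀ x₁ x₂ : X, dX x₁ x₂ / K - C ≤ dY (f x₁) (f x₂)) ∧
  (∀ x₁ x₂ : X, dY (f x₁) (f x₂) ≤ K * dX x₁ x₂ + C) ∧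
  (∀ y : Y, ∃ x : X, dY (f x) y ≤ C)

/-- The word metric on a group `G` associated to a generating set `S`:
the distance from `g` to `h` is the length of a shortest word in the
elements of `S` and their inverses representing `g⁻¹ * h`. -/
noncomputable def wordDist {G : Type*} [Group G] (S : Set G) (g h : G) : ℝ :=
  sInf {r : ℝ | ∃ L : List G, (∀ x ∈ L, x ∈ S ∨ x⁻¹ ∈ S) ∧
      L.prod = g⁻¹ * h ∧ r = L.length}

/-- Two groups are quasi-isometric if, when equipped with word metrics coming
from finite generating sets, there is a quasi-isometry between them. -/
def QuasiIsometricGroups (G H : Type*) [Group G] [Group H] : Prop :=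
  ∃ (S : Finset G) (T : Finset H),
    Subgroup.closure (S : Set G) = ⊤ ∧ Subgroup.closure (T : Set H) = ⊤ ∧
    ∃ (K C : ℝ) (f : G → H), 1 ≤ K ∧ 0 ≤ C ∧
      IsQI K C (wordDist (S : Set G)) (wordDist (T : Set H)) f

/-- Two groups are (abstractly) commensurable if they contain isomorphic
subgroups of finite index. -/
def CommensurableGroups (G H : Type*) [Group G] [Group H] : Prop :=
  ∃ (G₁ : Subgroup G) (H₁ : Subgroup H),
    G₁.FiniteIndex ∧ H₁.FiniteIndex ∧ Nonempty (G₁ ≃* H₁)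

/-- The relators for the group
`Γ(n₁,…,n_k) = ⟨a₁,…,a_k, b ∣ aᵢ⁻¹ b aᵢ = b^{nᵢ}, aᵢaⱼ = aⱼaᵢ (i ≠ j)⟩`.
The generator `aᵢ` is `Sum.inl i` and `b` is `Sum.inr ()`. -/
def gammaRels {k : ℕ} (n : Fin k → ℕ) : Set (FreeGroup (Fin k ⊕ Unit)) :=
  {r | (∃ i : Fin k,
        r = (FreeGroup.of (Sum.inl i))⁻¹ * FreeGroup.of (Sum.inr ()) *
            FreeGroup.of (Sum.inl i) * (FreeGroup.of (Sum.inr ()) ^ (n i))⁻¹) ∨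
      (∃ i j : Fin k, i ≠ j ∧
        r = FreeGroup.of (Sum.inl i) * FreeGroup.of (Sum.inl j) *
            (FreeGroup.of (Sum.inl i))⁻¹ * (FreeGroup.of (Sum.inl j))⁻¹)}

/-- The group `Γ(n₁,…,n_k)` given by the presentation
`⟨a₁,…,a_k, b ∣ aᵢ⁻¹ b aᵢ = b^{nᵢ}, aᵢaⱼ = aⱼaᵢ (i ≠ j)⟩`. -/
def GammaGroup {k : ℕ} (n : Fin k → ℕ) : Type := PresentedGroup (gammaRels n)

instance {k : ℕ} (n : Fin k → ℕ) : Group (GammaGroup n) := by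
  unfold GammaGroup; infer_instance

/-- The generator `aᵢ` of `Γ(n₁,…,n_k)`. -/
def gammaA {k : ℕ} (n : Fin k → ℕ) (i : Fin k) : GammaGroup n :=
  PresentedGroup.of (rels := gammaRels n) (Sum.inl i)

/-- The generator `b` of `Γ(n₁,…,n_k)`. -/
def gammaB {k : ℕ} (n : Fin k → ℕ) : GammaGroup n :=
  PresentedGroup.of (rels := gammaRels n) (Sum.inr ())

/-- The solvable Baumslag–Solitar group `BS(1,n) = ⟨a, b ∣ a b a⁻¹ = bⁿ⟩`.
The generator `a` is `true` and `b` is `false`. -/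
def BS (n : ℕ) : Type :=
  PresentedGroup {FreeGroup.of true * FreeGroup.of false * (FreeGroup.of true)⁻¹ *
    (FreeGroup.of false ^ n)⁻¹}

instance (n : ℕ) : Group (BS n) := by unfold BS; infer_instance

section WordMetric

variable {G : Type*} [Group G]

theorem wd_nonneg (S : Set G) (g h : G) : 0 ≤ wordDist S g h := by
  apply Real.sInf_nonneg
  rintro r ⟨L, -, -, rfl⟩
  positivity

theorem wd_le_of_list (S : Set G) (g h : G) (L : List G) (hL : ∀ x ∈ L, x ∈ S ∨ x⁻¹ ∈ S)
    (hp : L.prod = g⁻¹ * h) : wordDist S g h ≤ L.length := by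
  apply csInf_le
  · refine ⟨0, ?_⟩
    rintro r ⟨L, -, -, rfl⟩
    positivity
  · exact ⟨L, hL, hp, rfl⟩

theorem wd_exists_list_prod (S : Set G) (hS : Subgroup.closure S = ⊤) (x : G) :
    ∃ L : List G, (∀ x ∈ L, x ∈ S ∨ x⁻¹ ∈ S) ∧ L.prod = x := by
  have hx : x ∈ Subgroup.closure S := by rw [hS]; trivial
  rw [← Subgroup.mem_toSubmonoid, Subgroup.closure_toSubmonoid] at hx
  obtain ⟨L, h1, h2⟩ := Submonoid.exists_list_of_mem_closure hx
  exact ⟨L, fun y hy => by simpa using h1 y hy, h2⟩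

theorem wd_exists_list (S : Set G) (hS : Subgroup.closure S = ⊤) (g h : G) :
    ∃ L : List G, (∀ x ∈ L, x ∈ S ∨ x⁻¹ ∈ S) ∧ L.prod = g⁻¹ * h ∧
      wordDist S g h = L.length := by
  classical
  have hex : ∃ N : ℕ, ∃ L : List G, (∀ x ∈ L, x ∈ S ∨ x⁻¹ ∈ S) ∧ L.prod = g⁻¹ * h ∧
      N = L.length := by
    obtain ⟨L, h1, h2⟩ := wd_exists_list_prod S hS (g⁻¹ * h)
    exact ⟨_, L, h1, h2, rfl⟩
  obtain ⟨L, h1, h2, h3⟩ := Nat.find_spec hex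
  refine ⟨L, h1, h2, le_antisymm (wd_le_of_list S g h L h1 h2) ?_⟩
  apply le_csInf
  · exact ⟨_, L, h1, h2, rfl⟩
  · rintro r ⟨L', h1', h2', rfl⟩
    rw [← h3]
    exact_mod_cast Nat.find_min' hex ⟨L', h1', h2', rfl⟩

theorem wd_left (S : Set G) (x g h : G) : wordDist S (x * g) (x * h) = wordDist S g h := by
  unfold wordDist
  simp [mul_assoc]

theorem wd_one (S : Set G) (g h : G) : wordDist S g h = wordDist S 1 (g⁻¹ * h) := by
  rw [← wd_left S g⁻¹ g h]; simp

theorem wd_self (S : Set G) (g : G) : wordDist S g g = 0 := by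
  refine le_antisymm ?_ (wd_nonneg S g g)
  simpa using wd_le_of_list S g g [] (by simp) (by simp)

theorem wd_triangle (S : Set G) (hS : Subgroup.closure S = ⊤) (g h k : G) :
    wordDist S g k ≤ wordDist S g h + wordDist S h k := by
  obtain ⟨L, h1, h2, h3⟩ := wd_exists_list S hS g h
  obtain ⟨L', h1', h2', h3'⟩ := wd_exists_list S hS h k
  have := wd_le_of_list S g k (L ++ L') (by
    intro x hx
    rcases List.mem_append.1 hx with hx | hx
    · exact h1 x hx
    · exact h1' x hx) (by rw [List.prod_append, h2, h2']; group)
  rw [h3, h3']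
  simpa using this

theorem wd_symm_le (S : Set G) (hS : Subgroup.closure S = ⊤) (g h : G) :
    wordDist S h g ≤ wordDist S g h := by
  obtain ⟨L, h1, h2, h3⟩ := wd_exists_list S hS g h
  have := wd_le_of_list S h g (L.map (·⁻¹)).reverse (by
    intro x hx
    simp only [List.mem_reverse, List.mem_map] at hx
    obtain ⟨y, hy, rfl⟩ := hx
    rcases h1 y hy with h | h
    · right; simpa using h
    · left; exact h) (by rw [← List.prod_inv_reverse, h2]; group)
  rw [h3]; simpa using this

theorem wd_symm (S : Set G) (hS : Subgroup.closure S = ⊤) (g h : G) :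
    wordDist S h g = wordDist S g h :=
  le_antisymm (wd_symm_le S hS g h) (wd_symm_le S hS h g)

theorem wl_mul (S : Set G) (hS : Subgroup.closure S = ⊤) (g h : G) :
    wordDist S 1 (g * h) ≤ wordDist S 1 g + wordDist S 1 h := by
  have := wd_triangle S hS 1 g (g * h)
  rwa [wd_one S g (g * h), inv_mul_cancel_left] at this

theorem wl_inv (S : Set G) (hS : Subgroup.closure S = ⊤) (g : G) :
    wordDist S 1 g⁻¹ = wordDist S 1 g := by
  rw [wd_symm S hS g⁻¹ 1, wd_one S g⁻¹ 1]; simp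

theorem wl_gen (S : Set G) (g : G) (hg : g ∈ S) : wordDist S 1 g ≤ 1 := by
  simpa using wd_le_of_list S 1 g [g] (by simp [hg]) (by simp)

theorem wl_pow (S : Set G) (hS : Subgroup.closure S = ⊤) (g : G) (hg : g ∈ S) (r : ℕ) :
    wordDist S 1 (g ^ r) ≤ r := by
  induction r with
  | zero => simp [wd_self]
  | succ r ih =>
    rw [pow_succ]
    have := wl_mul S hS (g ^ r) g
    have := wl_gen S g hg
    push_cast; linarith

theorem wl_zpow (S : Set G) (hS : Subgroup.closure S = ⊤) (g : G) (hg : g ∈ S) (r : ℤ) :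
    wordDist S 1 (g ^ r) ≤ |(r : ℝ)| := by
  have h := wl_pow S hS g hg r.natAbs
  have e : ((r.natAbs : ℕ) : ℝ) = |(r : ℝ)| := by
    rw [← Int.cast_abs, Int.abs_eq_natAbs]; simp
  rw [e] at h
  rcases Int.natAbs_eq r with hr | hr
  · rw [hr, zpow_natCast, ← hr]; exact h
  · rw [hr, zpow_neg, zpow_natCast, wl_inv S hS, ← hr]; exact h

/-- subadditive functions are bounded by word length -/
theorem subadd_le_wd (S : Set G) (hS : Subgroup.closure S = ⊤) (N : G → ℝ) (c : ℝ)
    (h1 : N 1 ≤ 0) (hmul : ∀ x y, N (x * y) ≤ N x + N y)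
    (hc : ∀ x, x ∈ S ∨ x⁻¹ ∈ S → N x ≤ c) (g h : G) :
    N (g⁻¹ * h) ≤ c * wordDist S g h := by
  obtain ⟨L, hL, h2, h3⟩ := wd_exists_list S hS g h
  rw [h3, ← h2]
  clear h2 h3
  induction L with
  | nil => simpa using h1
  | cons x L ih =>
    have := ih (fun y hy => hL y (List.mem_cons_of_mem _ hy))
    have h4 := hc x (hL x (by simp))
    have h5 := hmul x L.prod
    simp only [List.prod_cons, List.length_cons]
    push_cast
    linarith

theorem subadd_le_wd_fin (S : Set G) (hfin : S.Finite) (hS : Subgroup.closure S = ⊤) (N : G → ℝ)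
    (h1 : N 1 ≤ 0) (hmul : ∀ x y, N (x * y) ≤ N x + N y) :
    ∃ c : ℝ, 1 ≤ c ∧ ∀ g h, N (g⁻¹ * h) ≤ c * wordDist S g h := by
  have hfin' : (S ∪ S⁻¹).Finite := hfin.union hfin.inv
  obtain ⟨c, hc⟩ := (hfin'.image N).bddAbove
  refine ⟨max c 1, le_max_right _ _, subadd_le_wd S hS N _ h1 hmul ?_⟩
  intro x hx
  refine le_trans (hc ⟨x, ?_, rfl⟩) (le_max_left _ _)
  simpa using hx

theorem wd_change (S T : Set G) (hfin : S.Finite) (hS : Subgroup.closure S = ⊤)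
    (hT : Subgroup.closure T = ⊤) :
    ∃ c : ℝ, 1 ≤ c ∧ ∀ g h, wordDist T g h ≤ c * wordDist S g h := by
  obtain ⟨c, hc, h⟩ := subadd_le_wd_fin S hfin hS (fun g => wordDist T 1 g)
    (by simp [wd_self]) (wl_mul T hT)
  refine ⟨c, hc, fun g k => ?_⟩
  rw [wd_one T]; exact h g k

theorem ball_finite (S : Set G) (hfin : S.Finite) (hS : Subgroup.closure S = ⊤) (r : ℝ) :
    {g : G | wordDist S 1 g ≤ r}.Finite := by
  have hfin' : (S ∪ S⁻¹).Finite := hfin.union hfin.inv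
  have : Finite ↥(S ∪ S⁻¹) := hfin'
  have h := (List.finite_length_le ↥(S ∪ S⁻¹) (⌊r⌋₊)).image
    (fun L => (L.map Subtype.val).prod)
  refine h.subset ?_
  intro g hg
  obtain ⟨L, hL, h2, h3⟩ := wd_exists_list S hS 1 g
  have hL' : ∀ x ∈ L, x ∈ S ∪ S⁻¹ := fun x hx => by simpa using hL x hx
  refine ⟨L.attach.map (fun x => ⟨x.1, hL' x.1 x.2⟩), ?_, ?_⟩
  · simp only [Set.mem_ofPred_eq, List.length_map, List.length_attach]
    apply Nat.le_floor
    rw [← h3]; exact hg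
  · simp only [List.map_map]
    have : (Subtype.val ∘ fun x : {x // x ∈ L} => (⟨x.1, hL' x.1 x.2⟩ : ↥(S ∪ S⁻¹)))
      = Subtype.val := by ext; rfl
    rw [this, List.attach_map_subtype_val, h2]; simp

end WordMetric

/-- quasi-isometric embedding -/
def QE {X Y : Type*} (dX : X → X → ℝ) (dY : Y → Y → ℝ) (f : X → Y) : Prop :=
  ∃ K : ℝ, 1 ≤ K ∧ (∀ x y, dY (f x) (f y) ≤ K * dX x y + K) ∧
    (∀ x y, dX x y ≤ K * dY (f x) (f y) + K)

theorem QE_of_le {X Y : Type*} {dX : X → X → ℝ} {dY : Y → Y → ℝ} {f : X → Y}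
    {K₁ K₂ C₁ C₂ : ℝ} (h1 : ∀ x y, 0 ≤ dX x y) (h2 : ∀ x y, 0 ≤ dY x y)
    (hu : ∀ x y, dY (f x) (f y) ≤ K₁ * dX x y + C₁)
    (hl : ∀ x y, dX x y ≤ K₂ * dY (f x) (f y) + C₂) : QE dX dY f := by
  refine ⟨max (max K₁ K₂) (max (max C₁ C₂) 1), by simp, ?_, ?_⟩
  · intro x y
    refine (hu x y).trans (add_le_add (mul_le_mul_of_nonneg_right (by simp) (h1 _ _)) (by simp))
  · intro x y
    refine (hl x y).trans (add_le_add (mul_le_mul_of_nonneg_right (by simp) (h2 _ _)) (by simp))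

theorem QE_change {G H : Type*} [Group G] [Group H] {S S' : Set G} {T T' : Set H}
    (hSf : S.Finite) (hSf' : S'.Finite) (hTf : T.Finite) (hTf' : T'.Finite)
    (hS : Subgroup.closure S = ⊤) (hS' : Subgroup.closure S' = ⊤)
    (hT : Subgroup.closure T = ⊤) (hT' : Subgroup.closure T' = ⊤)
    (f : G → H) (h : QE (wordDist S) (wordDist T) f) : QE (wordDist S') (wordDist T') f := by
  obtain ⟨K, hK, hu, hl⟩ := h
  obtain ⟨c1, hc1, h1⟩ := wd_change S S' hSf hS hS'
  obtain ⟨c2, hc2, h2⟩ := wd_change S' S hSf' hS' hS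
  obtain ⟨c3, hc3, h3⟩ := wd_change T T' hTf hT hT'
  obtain ⟨c4, hc4, h4⟩ := wd_change T' T hTf' hT' hT
  apply QE_of_le (K₁ := c3 * K * c2) (C₁ := c3 * K) (K₂ := c1 * K * c4) (C₂ := c1 * K)
    (wd_nonneg _) (wd_nonneg _)
  · intro x y
    calc _ ≤ c3 * wordDist T (f x) (f y) := h3 _ _
      _ ≤ c3 * (K * (c2 * wordDist S' x y) + K) := by
        gcongr
        refine (hu x y).trans ?_
        gcongr
        exact h2 _ _
      _ = _ := by ring
  · intro x y
    calc _ ≤ c1 * wordDist S x y := h1 _ _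
      _ ≤ c1 * (K * (c4 * wordDist T' (f x) (f y)) + K) := by
        gcongr
        refine (hl x y).trans ?_
        gcongr
        exact h4 _ _
      _ = _ := by ring

theorem QE_of_QI {G H : Type*} [Group G] [Group H] {S : Set G} {T : Set H}
    {K C : ℝ} (hK : 1 ≤ K) {f : G → H}
    (h : IsQI K C (wordDist S) (wordDist T) f) : QE (wordDist S) (wordDist T) f := by
  obtain ⟨hl, hu, -⟩ := h
  apply QE_of_le (wd_nonneg _) (wd_nonneg _) hu (K₂ := K) (C₂ := K * C)
  intro x y
  have := hl x y
  have hK0 : 0 < K := by linarith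
  rw [sub_le_iff_le_add, div_le_iff₀ hK0] at this
  linarith

theorem QE_inv_of_QI {G H : Type*} [Group G] [Group H] {S : Set G} {T : Set H}
    (hT : Subgroup.closure T = ⊤)
    {K C : ℝ} (hK : 1 ≤ K) {f : G → H}
    (h : IsQI K C (wordDist S) (wordDist T) f) :
    ∃ g : H → G, QE (wordDist T) (wordDist S) g := by
  obtain ⟨hl, hu, hc⟩ := h
  choose g hg using hc
  have hK0 : 0 < K := by linarith
  refine ⟨g, ?_⟩
  apply QE_of_le (wd_nonneg _) (wd_nonneg _) (K₁ := K) (C₁ := K * (3 * C)) (K₂ := K) (C₂ := 3 * C)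
  · intro x y
    have h1 := hl (g x) (g y)
    rw [sub_le_iff_le_add, div_le_iff₀ hK0] at h1
    have h2 := wd_triangle T hT (f (g x)) x (f (g y))
    have h3 := wd_triangle T hT x y (f (g y))
    have h4 := hg x
    have h5 := hg y
    rw [wd_symm T hT] at h5
    refine h1.trans ?_
    rw [mul_comm, ← mul_add]
    apply mul_le_mul_of_nonneg_left _ hK0.le
    linarith
  · intro x y
    have h1 := hu (g x) (g y)
    have h2 := wd_triangle T hT x (f (g x)) y
    have h3 := wd_triangle T hT (f (g x)) (f (g y)) y
    have h4 := hg x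
    have h5 := hg y
    rw [wd_symm T hT] at h4
    linarith

section Gamma

variable {k : ℕ} (n : Fin k → ℕ)

theorem gamma_rel_conj (i : Fin k) :
    (gammaA n i)⁻¹ * gammaB n * gammaA n i = gammaB n ^ (n i) := by
  have h : PresentedGroup.mk (gammaRels n) ((FreeGroup.of (Sum.inl i))⁻¹ *
      FreeGroup.of (Sum.inr ()) * FreeGroup.of (Sum.inl i) *
      (FreeGroup.of (Sum.inr ()) ^ (n i))⁻¹) = 1 :=
    PresentedGroup.one_of_mem (Or.inl ⟨i, rfl⟩)
  rw [map_mul, map_inv, mul_inv_eq_one] at h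
  exact h

theorem gamma_rel_comm (i j : Fin k) : Commute (gammaA n i) (gammaA n j) := by
  by_cases hij : i = j
  · subst hij; exact Commute.refl _
  have h : PresentedGroup.mk (gammaRels n) (FreeGroup.of (Sum.inl i) * FreeGroup.of (Sum.inl j) *
            (FreeGroup.of (Sum.inl i))⁻¹ * (FreeGroup.of (Sum.inl j))⁻¹) = 1 :=
    PresentedGroup.one_of_mem (Or.inr ⟨i, j, hij, rfl⟩)
  rw [map_mul, map_inv, mul_inv_eq_one, map_mul, map_inv, mul_inv_eq_iff_eq_mul] at h
  exact h

/-- universal property -/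
theorem gamma_lift {H : Type*} [Group H] (a : Fin k → H) (b : H)
    (hc : ∀ i, (a i)⁻¹ * b * a i = b ^ (n i)) (hcomm : ∀ i j, a i * a j = a j * a i) :
    ∃ φ : GammaGroup n →* H, (∀ i, φ (gammaA n i) = a i) ∧ φ (gammaB n) = b := by
  have hr : ∀ r ∈ gammaRels n, FreeGroup.lift (Sum.elim a (fun _ : Unit => b)) r = 1 := by
    rintro r (⟨i, rfl⟩ | ⟨i, j, -, rfl⟩)
    · simp [hc i]
    · simp [hcomm i j]
  refine ⟨PresentedGroup.toGroup hr, fun i => ?_, ?_⟩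
  · exact PresentedGroup.toGroup.of hr
  · exact PresentedGroup.toGroup.of hr

/-- standard generating set -/
def stdGen : Set (GammaGroup n) := insert (gammaB n) (Set.range (gammaA n))

theorem stdGen_finite : (stdGen n).Finite := (Set.finite_range _).insert _

theorem stdGen_closure : Subgroup.closure (stdGen n) = ⊤ := by
  have h := PresentedGroup.closure_range_of (gammaRels n)
  rw [eq_top_iff]
  have : (⊤ : Subgroup (GammaGroup n)) = Subgroup.closure (Set.range
      (PresentedGroup.of (rels := gammaRels n))) := h.symm
  rw [this]
  apply Subgroup.closure_mono
  rintro _ ⟨x | x, rfl⟩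
  · exact Or.inr ⟨x, rfl⟩
  · exact Or.inl rfl

theorem exists_ht : ∃ φ : GammaGroup n →* Multiplicative (Fin k → ℤ),
    (∀ i, φ (gammaA n i) = Multiplicative.ofAdd (Pi.single i 1)) ∧ φ (gammaB n) = 1 := by
  apply gamma_lift
  · intro i; simp
  · intro i j; exact mul_comm _ _

/-- The height homomorphism. -/
noncomputable def htHom : GammaGroup n →* Multiplicative (Fin k → ℤ) := (exists_ht n).choose

/-- The height of an element. -/
noncomputable def ht (g : GammaGroup n) : Fin k → ℤ := (htHom n g).toAdd

theorem ht_A (i : Fin k) : ht n (gammaA n i) = Pi.single i 1 := by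
  unfold ht htHom; rw [(exists_ht n).choose_spec.1 i]; rfl

theorem ht_B : ht n (gammaB n) = 0 := by
  unfold ht htHom; rw [(exists_ht n).choose_spec.2]; rfl

theorem ht_mul (g h : GammaGroup n) : ht n (g * h) = ht n g + ht n h := by
  unfold ht; rw [map_mul]; rfl

theorem ht_one : ht n 1 = 0 := by
  unfold ht; rw [map_one]; rfl

theorem ht_inv (g : GammaGroup n) : ht n g⁻¹ = - ht n g := by
  unfold ht; rw [map_inv]; rfl

/-- The flat homomorphism. -/
noncomputable def alHom : (Fin k → Multiplicative ℤ) →* GammaGroup n :=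
  MonoidHom.noncommPiCoprod (fun i => zpowersHom _ (gammaA n i)) (by
    intro i j _ x y
    simp only [zpowersHom_apply]
    exact ((gamma_rel_comm n i j).zpow_zpow _ _))

/-- `al z = a^z`. -/
noncomputable def al (z : Fin k → ℤ) : GammaGroup n := alHom n (fun i => Multiplicative.ofAdd (z i))

theorem al_add (z w : Fin k → ℤ) : al n (z + w) = al n z * al n w := by
  unfold al; rw [← map_mul]; rfl

theorem al_zero : al n 0 = 1 := by
  unfold al; rw [← map_one (alHom n)]; rfl

theorem al_neg (z : Fin k → ℤ) : al n (-z) = (al n z)⁻¹ := by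
  rw [eq_inv_iff_mul_eq_one, ← al_add, neg_add_cancel, al_zero]

theorem al_single (i : Fin k) (r : ℤ) : al n (Pi.single i r) = gammaA n i ^ r := by
  unfold al
  have : (fun j => Multiplicative.ofAdd ((Pi.single i r : Fin k → ℤ) j)) =
      Pi.mulSingle i (Multiplicative.ofAdd r) := by
    ext j
    by_cases h : j = i
    · subst h; simp
    · simp [h]
  rw [this]
  refine (MonoidHom.noncommPiCoprod_mulSingle _ _ _).trans ?_
  simp [zpowersHom_apply]

theorem al_induction (p : (Fin k → ℤ) → Prop) (h0 : p 0) (hadd : ∀ z w, p z → p w → p (z + w))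
    (hs : ∀ i r, p (Pi.single i r)) (z : Fin k → ℤ) : p z := by
  rw [← Finset.univ_sum_single z]
  exact Finset.sum_induction _ p hadd h0 (fun i _ => hs i _)

theorem ht_zpow (g : GammaGroup n) (r : ℤ) : ht n (g ^ r) = r • ht n g := by
  unfold ht; rw [map_zpow]; rfl

theorem ht_al (z : Fin k → ℤ) : ht n (al n z) = z := by
  refine al_induction (fun z => ht n (al n z) = z) ?_ ?_ ?_ z
  · rw [al_zero, ht_one]
  · intro z w hz hw; rw [al_add, ht_mul, hz, hw]
  · intro i r
    rw [al_single, ht_zpow, ht_A]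
    ext j
    by_cases h : j = i
    · subst h; simp
    · simp [h]

theorem wl_al (z : Fin k → ℤ) : wordDist (stdGen n) 1 (al n z) ≤ ∑ i, |(z i : ℝ)| := by
  have key : ∀ s : Finset (Fin k), wordDist (stdGen n) 1 (al n (∑ i ∈ s, Pi.single i (z i))) ≤
      ∑ i ∈ s, |(z i : ℝ)| := by
    intro s
    induction s using Finset.induction_on with
    | empty => simp [al_zero, wd_self]
    | insert i s hi ih =>
      rw [Finset.sum_insert hi, Finset.sum_insert hi, al_add]
      refine (wl_mul _ (stdGen_closure n) _ _).trans (add_le_add ?_ ih)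
      rw [al_single]
      exact wl_zpow _ (stdGen_closure n) _ (Or.inr ⟨i, rfl⟩) _
  have := key Finset.univ
  rwa [Finset.univ_sum_single] at this

theorem conj_nat (v : Fin k → ℕ) :
    al n (-(fun i => (v i : ℤ))) * gammaB n * al n (fun i => (v i : ℤ)) =
      gammaB n ^ (∏ i, n i ^ v i) := by
  have key : ∀ v : Fin k → ℕ, (al n (fun i => (v i : ℤ)))⁻¹ * gammaB n * al n (fun i => (v i : ℤ)) =
      gammaB n ^ (∏ i, n i ^ v i) := by
    intro v
    rw [← Finset.univ_sum_single v]
    refine Finset.sum_induction (M := Fin k → ℕ) _ (fun v => (al n (fun i => (v i : ℤ)))⁻¹ * gammaB n *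
      al n (fun i => (v i : ℤ)) = gammaB n ^ (∏ i, n i ^ v i)) ?_ ?_ ?_
    · intro z w hz hw
      have e : (fun i => (((z + w) i : ℕ) : ℤ)) = (fun i => (z i : ℤ)) + (fun i => (w i : ℤ)) := by
        ext i; simp
      have e2 : ∏ i, n i ^ (z + w) i = (∏ i, n i ^ w i) * (∏ i, n i ^ z i) := by
        rw [← Finset.prod_mul_distrib]
        exact Finset.prod_congr rfl fun i _ => by rw [Pi.add_apply, add_comm, pow_add]
      rw [e, e2, al_add, pow_mul, ← hw]
      have := conj_pow (a := (al n (fun i => (w i : ℤ)))⁻¹) (b := gammaB n) (i := ∏ i, n i ^ z i)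
      rw [inv_inv] at this
      rw [this, ← hz]
      group
    · have e : (fun i => (((0 : Fin k → ℕ) i : ℕ) : ℤ)) = 0 := by ext; simp
      rw [e, al_zero]; simp
    · intro i _
      have e : (fun j => (((Pi.single i (v i) : Fin k → ℕ) j : ℕ) : ℤ)) =
          Pi.single i (v i : ℤ) := by
        ext j
        by_cases h : j = i
        · subst h; simp
        · simp [h]
      have e2 : ∏ j, n j ^ (Pi.single i (v i) : Fin k → ℕ) j = n i ^ v i := by
        rw [Finset.prod_eq_single i]
        · simp
        · intro j _ h; simp [h]
        · simp
      rw [e, e2, al_single, zpow_natCast]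
      generalize v i = r
      induction r with
      | zero => simp
      | succ r ih =>
        rw [pow_succ, pow_succ, mul_comm (n i ^ r), pow_mul, ← gamma_rel_conj]
        have := conj_pow (a := (gammaA n i)⁻¹) (b := gammaB n) (i := n i ^ r)
        rw [inv_inv] at this
        rw [this, ← ih]
        group
  rw [al_neg]; exact key v

theorem conj_int (hn2 : ∀ i, 2 ≤ n i) (z : Fin k → ℤ) (T : ℕ) (h0 : ∀ i, 0 ≤ z i)
    (hT : ∀ i, z i ≤ T) :
    ∃ q : ℕ, q ≤ (∏ i, n i) ^ T ∧ al n (-z) * gammaB n * al n z = gammaB n ^ q := by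
  have hz : z = fun i => (((z i).toNat : ℕ) : ℤ) := by
    ext i; simp [h0 i]
  refine ⟨∏ i, n i ^ (z i).toNat, ?_, ?_⟩
  · rw [← Finset.prod_pow]
    apply Finset.prod_le_prod'
    intro i _
    apply Nat.pow_le_pow_right
    · have := hn2 i; omega
    · have := hT i; omega
  · have h := conj_nat n (fun i => (z i).toNat)
    rw [← hz] at h; exact h

theorem wl_B_pow (hn2 : ∀ i, 2 ≤ n i) (i : Fin k) (j M : ℕ) (hM : M < 2 ^ j) :
    wordDist (stdGen n) 1 (gammaB n ^ M) ≤ j * (n i + 2) := by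
  have hcl := stdGen_closure n
  induction j generalizing M with
  | zero =>
    have : M = 0 := by simpa using hM
    subst this; simp [wd_self]
  | succ j ih =>
    have hq := hn2 i
    have h1 : M / n i < 2 ^ j := by
      refine lt_of_le_of_lt (Nat.div_le_div_left hq (by norm_num)) ?_
      rw [pow_succ] at hM
      omega
    have h2 : M % n i < n i := Nat.mod_lt _ (by omega)
    have e : gammaB n ^ M = (gammaA n i)⁻¹ * gammaB n ^ (M / n i) * gammaA n i *
        gammaB n ^ (M % n i) := by
      have := conj_pow (a := (gammaA n i)⁻¹) (b := gammaB n) (i := M / n i)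
      rw [inv_inv] at this
      rw [← this, gamma_rel_conj, ← pow_mul, ← pow_add, Nat.div_add_mod]
    rw [e]
    have hA : gammaA n i ∈ stdGen n := Or.inr ⟨i, rfl⟩
    have hB : gammaB n ∈ stdGen n := Or.inl rfl
    have t1 := wl_mul _ hcl ((gammaA n i)⁻¹ * gammaB n ^ (M / n i) * gammaA n i)
      (gammaB n ^ (M % n i))
    have t2 := wl_mul _ hcl ((gammaA n i)⁻¹ * gammaB n ^ (M / n i)) (gammaA n i)
    have t3 := wl_mul _ hcl ((gammaA n i)⁻¹) (gammaB n ^ (M / n i))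
    have t4 := ih _ h1
    have t5 := wl_gen _ _ hA
    have t6 := wl_inv _ hcl (gammaA n i)
    have t7 := wl_pow _ hcl _ hB (M % n i)
    have t8 : ((M % n i : ℕ) : ℝ) ≤ n i := by exact_mod_cast h2.le
    push_cast
    linarith

theorem wl_B_zpow (hn2 : ∀ i, 2 ≤ n i) (i : Fin k) (j : ℕ) (M : ℤ) (hM : |M| < 2 ^ j) :
    wordDist (stdGen n) 1 (gammaB n ^ M) ≤ j * (n i + 2) := by
  have h : M.natAbs < 2 ^ j := by
    rw [Int.abs_eq_natAbs] at hM; exact_mod_cast hM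
  have := wl_B_pow n hn2 i j _ h
  rcases Int.natAbs_eq M with hr | hr
  · rw [hr, zpow_natCast]; exact this
  · rw [hr, zpow_neg, zpow_natCast, wl_inv _ (stdGen_closure n)]; exact this

end Gamma

section Chain

variable {k : ℕ} (n : Fin k → ℕ)

/-- The normal form of bounded complexity. -/
def NF (T Q : ℕ) (g : GammaGroup n) : Prop :=
  ∃ M : ℤ, |M| ≤ Q ∧ g = al n (fun _ => (T : ℤ)) * gammaB n ^ M *
    al n (-(fun _ => (T : ℤ))) * al n (ht n g)

theorem NF_mul_al (T Q : ℕ) (g : GammaGroup n) (h : NF n T Q g) (z : Fin k → ℤ) :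
    NF n T Q (g * al n z) := by
  obtain ⟨M, hM, hg⟩ := h
  refine ⟨M, hM, ?_⟩
  rw [ht_mul, ht_al, al_add, ← mul_assoc, ← hg]

theorem NF_mul_B (hn2 : ∀ i, 2 ≤ n i) (T Q : ℕ) (g : GammaGroup n) (h : NF n T Q g)
    (hb : ∀ i, |ht n g i| ≤ T) (e : ℤ) (he : |e| = 1) :
    NF n T (Q + (∏ i, n i) ^ (2 * T)) (g * gammaB n ^ e) := by
  obtain ⟨M, hM, hg⟩ := h
  obtain ⟨q, hq, hc⟩ := conj_int n hn2 ((fun _ => (T : ℤ)) - ht n g) (2 * T)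
    (fun i => by have := abs_le.1 (hb i); simp; linarith)
    (fun i => by have := abs_le.1 (hb i); simp; linarith)
  have hht : ht n (g * gammaB n ^ e) = ht n g := by
    rw [ht_mul, ht_zpow, ht_B]; simp
  refine ⟨M + q * e, ?_, ?_⟩
  · refine (abs_add_le _ _).trans ?_
    rw [abs_mul, he]
    push_cast
    have : (q : ℤ) ≤ (∏ i, (n i : ℤ)) ^ (2 * T) := by exact_mod_cast hq
    simp only [Nat.abs_cast]
    linarith
  · rw [hht]
    set τ : Fin k → ℤ := fun _ => (T : ℤ) with hτ
    have hc2 : al n (-(τ - ht n g)) * gammaB n ^ e * al n (τ - ht n g) = gammaB n ^ ((q : ℤ) * e) := by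
      rw [zpow_mul, zpow_natCast, ← hc]
      have := conj_zpow (a := al n (-(τ - ht n g))) (b := gammaB n) (i := e)
      rw [← al_neg, neg_neg] at this
      exact this.symm
    rw [zpow_add, ← hc2]
    nth_rewrite 1 [hg]
    have e1 : al n (-(τ - ht n g)) = al n (-τ) * al n (ht n g) := by
      rw [← al_add]; congr 1; abel
    have e2 : al n (τ - ht n g) = (al n (ht n g))⁻¹ * al n τ := by
      rw [← al_neg, ← al_add]; congr 1; abel
    rw [e1, e2, al_neg n τ]
    group

theorem NF_letter (hn2 : ∀ i, 2 ≤ n i) (T Q : ℕ) (g : GammaGroup n) (h : NF n T Q g)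
    (hb : ∀ i, |ht n g i| ≤ T) (x : GammaGroup n) (hx : x ∈ stdGen n ∨ x⁻¹ ∈ stdGen n) :
    NF n T (Q + (∏ i, n i) ^ (2 * T)) (g * x) ∧ ∀ i, |ht n (g * x) i| ≤ |ht n g i| + 1 := by
  have mono : ∀ y, NF n T Q y → NF n T (Q + (∏ i, n i) ^ (2 * T)) y := by
    rintro y ⟨M, hM, hy⟩
    refine ⟨M, hM.trans ?_, hy⟩
    exact_mod_cast Nat.le_add_right _ _
  have key : (∃ e : ℤ, |e| = 1 ∧ x = gammaB n ^ e) ∨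
      (∃ (i : Fin k) (e : ℤ), |e| = 1 ∧ x = gammaA n i ^ e) := by
    rcases hx with (h | ⟨i, h⟩) | (h | ⟨i, h⟩)
    · exact Or.inl ⟨1, by simp, by simp [h]⟩
    · exact Or.inr ⟨i, 1, by simp, by simp [h]⟩
    · exact Or.inl ⟨-1, by simp, by simp [← h]⟩
    · exact Or.inr ⟨i, -1, by simp, by simp [h]⟩
  rcases key with ⟨e, he, rfl⟩ | ⟨i, e, he, rfl⟩
  · refine ⟨NF_mul_B n hn2 T Q g h hb e he, fun i => ?_⟩
    rw [ht_mul, ht_zpow, ht_B]; simp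
  · rw [← al_single]
    refine ⟨mono _ (NF_mul_al n T Q g h _), fun j => ?_⟩
    rw [ht_mul, ht_al, Pi.add_apply]
    refine (abs_add_le _ _).trans ?_
    gcongr
    by_cases hj : j = i
    · subst hj; simp [he]
    · simp [hj]

theorem NF_list (hn2 : ∀ i, 2 ≤ n i) (T : ℕ) (L : List (GammaGroup n))
    (hL : ∀ x ∈ L, x ∈ stdGen n ∨ x⁻¹ ∈ stdGen n) (H Q : ℕ) (g : GammaGroup n) (h : NF n T Q g)
    (hb : ∀ i, |ht n g i| ≤ H) (hT : H + L.length ≤ T) :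
    NF n T (Q + L.length * (∏ i, n i) ^ (2 * T)) (g * L.prod) := by
  induction L generalizing H Q g with
  | nil => simpa using h
  | cons x L ih =>
    simp only [List.length_cons] at hT ⊢
    obtain ⟨h1, h2⟩ := NF_letter n hn2 T Q g h
      (fun i => (hb i).trans (by exact_mod_cast (by omega))) x (hL x (by simp))
    have := ih (fun y hy => hL y (by simp [hy])) (H + 1) _ _ h1
      (fun i => (h2 i).trans (by push_cast; linarith [hb i])) (by omega)
    rw [List.prod_cons, ← mul_assoc]
    convert this using 1
    ring

theorem NF_chain (hn2 : ∀ i, 2 ≤ n i) (N H D : ℕ) (g : ℕ → GammaGroup n) (h0 : g 0 = 1)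
    (hD : ∀ j < N, wordDist (stdGen n) (g j) (g (j + 1)) ≤ D)
    (hH : ∀ j ≤ N, ∀ i, |ht n (g j) i| ≤ H) (j : ℕ) (hj : j ≤ N) :
    NF n (H + D) (j * D * (∏ i, n i) ^ (2 * (H + D))) (g j) := by
  induction j with
  | zero =>
    rw [h0]
    refine ⟨0, by simp, ?_⟩
    rw [ht_one, al_zero, al_neg]; simp
  | succ j ih =>
    have ih := ih (by omega)
    obtain ⟨L, hL, hp, hlen⟩ := wd_exists_list (stdGen n) (stdGen_closure n) (g j) (g (j + 1))
    have hl : L.length ≤ D := by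
      have := hD j (by omega)
      rw [hlen] at this
      exact_mod_cast this
    have := NF_list n hn2 (H + D) L hL H _ (g j) ih (hH j (by omega)) (by omega)
    rw [hp, mul_inv_cancel_left] at this
    obtain ⟨M, hM, hy⟩ := this
    refine ⟨M, hM.trans ?_, hy⟩
    have : L.length * (∏ i, n i) ^ (2 * (H + D)) ≤ D * (∏ i, n i) ^ (2 * (H + D)) := by gcongr
    have e : (j + 1) * D * (∏ i, n i) ^ (2 * (H + D)) =
      j * D * (∏ i, n i) ^ (2 * (H + D)) + D * (∏ i, n i) ^ (2 * (H + D)) := by ring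
    rw [e]
    exact_mod_cast Nat.add_le_add_left this _

theorem chain_bound (hn2 : ∀ i, 2 ≤ n i) (hk : 0 < k) :
    ∃ c : ℝ, 1 ≤ c ∧ ∀ (N H D : ℕ) (g : ℕ → GammaGroup n),
    (∀ j < N, wordDist (stdGen n) (g j) (g (j + 1)) ≤ D) →
    (∀ j ≤ N, ∀ i, |ht n (g j) i - ht n (g 0) i| ≤ H) →
    wordDist (stdGen n) (g 0) (g N) ≤ c * (N + H + D) := by
  set P := ∏ i, n i with hP
  let i0 : Fin k := ⟨0, hk⟩
  refine ⟨3 * k + (2 * P + 1) * (n i0 + 2), ?_, ?_⟩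
  · have : (1 : ℝ) ≤ k := by exact_mod_cast hk
    nlinarith [show (0 : ℝ) ≤ (2 * P + 1) * (n i0 + 2) by positivity]
  intro N H D g hD hH
  rw [wd_one]
  have hcl := stdGen_closure n
  obtain ⟨M, hM, hy⟩ := NF_chain n hn2 N H D (fun j => (g 0)⁻¹ * g j) (by simp)
    (fun j hj => by rw [wd_left]; exact hD j hj)
    (fun j hj i => by
      rw [ht_mul, ht_inv]
      have := hH j hj i
      simp only [Pi.add_apply, Pi.neg_apply]
      rwa [neg_add_eq_sub]) N le_rfl
  have hh : ∀ i, |ht n ((g 0)⁻¹ * g N) i| ≤ H := fun i => by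
      rw [ht_mul, ht_inv]
      have := hH N le_rfl i
      simp only [Pi.add_apply, Pi.neg_apply]
      rwa [neg_add_eq_sub]
  simp only at hy
  rw [hy]
  have hM2 : |M| < 2 ^ (N + D + P * (2 * (H + D))) := by
    refine lt_of_le_of_lt hM ?_
    rw [← hP]
    have h1 : P ^ (2 * (H + D)) ≤ 2 ^ (P * (2 * (H + D))) := by
      rw [pow_mul 2 P]; exact Nat.pow_le_pow_left (Nat.lt_two_pow_self).le _
    have h2 : N * D < 2 ^ (N + D) := by
      rw [pow_add]
      exact Nat.mul_lt_mul'' Nat.lt_two_pow_self Nat.lt_two_pow_self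
    have h3 : N * D * P ^ (2 * (H + D)) < 2 ^ (N + D) * 2 ^ (P * (2 * (H + D))) :=
      Nat.mul_lt_mul_of_lt_of_le h2 h1 (by positivity)
    rw [← pow_add] at h3
    exact_mod_cast h3
  have t1 := wl_B_zpow n hn2 i0 _ M hM2
  have t2 := wl_al n (fun _ => ((H + D : ℕ) : ℤ))
  have t3 : wordDist (stdGen n) 1 (al n (ht n ((g 0)⁻¹ * g N))) ≤ k * H := by
    refine (wl_al n _).trans ?_
    calc _ ≤ ∑ i : Fin k, (H : ℝ) := Finset.sum_le_sum fun i _ => by exact_mod_cast hh i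
      _ = _ := by simp
  have t4 : wordDist (stdGen n) 1 (al n (-(fun _ => ((H + D : ℕ) : ℤ)))) =
     wordDist (stdGen n) 1 (al n ((fun _ => ((H + D : ℕ) : ℤ)))) := by
    rw [al_neg, wl_inv _ hcl]
  have s1 := wl_mul _ hcl (al n (fun _ => ((H + D : ℕ) : ℤ)) * gammaB n ^ M *
    al n (-(fun _ => ((H + D : ℕ) : ℤ)))) (al n (ht n ((g 0)⁻¹ * g N)))
  have s2 := wl_mul _ hcl (al n (fun _ => ((H + D : ℕ) : ℤ)) * gammaB n ^ M)
    (al n (-(fun _ => ((H + D : ℕ) : ℤ))))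
  have s3 := wl_mul _ hcl (al n (fun _ => ((H + D : ℕ) : ℤ))) (gammaB n ^ M)
  have t5 : ∑ i : Fin k, |(((H + D : ℕ) : ℤ) : ℝ)| = k * (H + D) := by
    simp only [Finset.sum_const, Finset.card_univ, Fintype.card_fin, nsmul_eq_mul]
    rw [abs_of_nonneg (by positivity)]; push_cast; rfl
  rw [t5] at t2
  have hfin : wordDist (stdGen n) 1 (al n (fun _ => ((H + D : ℕ) : ℤ)) * gammaB n ^ M *
    al n (-(fun _ => ((H + D : ℕ) : ℤ))) * (al n (ht n ((g 0)⁻¹ * g N)))) ≤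
     2 * (k * (H + D)) + k * H + (N + D + P * (2 * (H + D))) * (n i0 + 2) := by
    push_cast at *
    linarith
  refine (hfin).trans ?_
  have a0 : (0 : ℝ) ≤ k * N := by positivity
  have a1 : (0 : ℝ) ≤ k * H := by positivity
  have a2 : (0 : ℝ) ≤ k * D := by positivity
  have a3 : (N + D + P * (2 * (H + D)) : ℝ) ≤ (2 * P + 1) * (N + H + D) := by
    have : (0 : ℝ) ≤ P * N := by positivity
    have : (0 : ℝ) ≤ H := by positivity
    nlinarith
  have a4 := mul_le_mul_of_nonneg_right a3 (show (0 : ℝ) ≤ n i0 + 2 by positivity)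
  nlinarith

end Chain

section Analytic

/-- cast an integer vector to a real vector -/
def toR {l : ℕ} (z : Fin l → ℤ) : Fin l → ℝ := fun i => (z i : ℝ)

/-- coordinatewise floor -/
noncomputable def flr {l : ℕ} (x : Fin l → ℝ) : Fin l → ℤ := fun i => ⌊x i⌋

theorem flr_sub_le {l : ℕ} (x y : Fin l → ℝ) :
    ‖toR (flr x) - toR (flr y)‖ ≤ ‖x - y‖ + 1 := by
  rw [pi_norm_le_iff_of_nonneg (by positivity)]
  intro i
  have h := norm_le_pi_norm (x - y) i
  simp only [Pi.sub_apply, Real.norm_eq_abs, toR, flr] at *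
  have h1 := Int.floor_le (x i)
  have h2 := Int.lt_floor_add_one (x i)
  have h3 := Int.floor_le (y i)
  have h4 := Int.lt_floor_add_one (y i)
  have h5 := abs_le.1 h
  rw [abs_le]
  constructor <;> linarith

theorem le_flr_sub {l : ℕ} (x y : Fin l → ℝ) :
    ‖x - y‖ ≤ ‖toR (flr x) - toR (flr y)‖ + 1 := by
  rw [pi_norm_le_iff_of_nonneg (by positivity)]
  intro i
  have h := norm_le_pi_norm (toR (flr x) - toR (flr y)) i
  simp only [Pi.sub_apply, Real.norm_eq_abs, toR, flr] at *
  have h1 := Int.floor_le (x i)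
  have h2 := Int.lt_floor_add_one (x i)
  have h3 := Int.floor_le (y i)
  have h4 := Int.lt_floor_add_one (y i)
  have h5 := abs_le.1 h
  rw [abs_le]
  constructor <;> linarith

theorem analytic {k l : ℕ} (hkl : k < l) (h : (Fin l → ℤ) → (Fin k → ℝ)) (K : ℝ) (hK : 0 ≤ K)
    (hLip : ∀ z w, ‖h z - h w‖ ≤ K * ‖toR z - toR w‖ + K) (ε : ℝ) (hε : 0 < ε) (M : ℕ) (hM : 0 < M)
    (R : ℝ) :
    ∃ s : ℝ, R ≤ s ∧ ∃ z : ℕ → (Fin l → ℤ),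
      (∀ j < M, ‖toR (z j) - toR (z (j + 1))‖ ≤ s / M + 1) ∧
      s ≤ ‖toR (z 0) - toR (z M)‖ + 1 ∧
      ∀ j ≤ M, ‖h (z j) - h (z 0)‖ ≤ ε * s := by
  classical
  let U : Ultrafilter ℕ := Ultrafilter.of Filter.atTop
  have hU : (U : Filter ℕ) ≤ Filter.atTop := Ultrafilter.of_le _
  let hn : ℕ → (Fin l → ℝ) → (Fin k → ℝ) := fun N x => (N : ℝ)⁻¹ • h (flr ((N : ℝ) • x))
  let gn : ℕ → (Fin l → ℝ) → (Fin k → ℝ) := fun N x => hn N x - hn N 0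
  have hb : ∀ N x y, ‖hn N x - hn N y‖ ≤ K * ‖x - y‖ + 2 * K * (N : ℝ)⁻¹ := by
    intro N x y
    rcases Nat.eq_zero_or_pos N with h0 | h0
    · subst h0; simp [hn]; positivity
    have hN : (0 : ℝ) < N := by exact_mod_cast h0
    have h1 := hLip (flr ((N : ℝ) • x)) (flr ((N : ℝ) • y))
    have h2 := flr_sub_le ((N : ℝ) • x) ((N : ℝ) • y)
    rw [← smul_sub, norm_smul, Real.norm_of_nonneg hN.le] at h2
    simp only [hn]
    rw [← smul_sub, norm_smul, Real.norm_of_nonneg (by positivity)]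
    calc (N : ℝ)⁻¹ * _ ≤ (N : ℝ)⁻¹ * (K * (N * ‖x - y‖ + 1) + K) := by
          gcongr
          exact h1.trans (by gcongr)
      _ = _ := by field_simp; ring
  have hlim : ∀ x, ∃ y, Filter.Tendsto (fun N => gn N x) U (nhds y) := by
    intro x
    have hc : IsCompact (Metric.closedBall (0 : Fin k → ℝ) (K * ‖x‖ + 2 * K)) :=
      isCompact_closedBall _ _
    obtain ⟨y, -, hy⟩ := hc.ultrafilter_le_nhds (U.map (fun N => gn N x)) (by
      rw [Ultrafilter.coe_map, Filter.le_principal_iff, Filter.mem_map]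
      refine Filter.univ_mem' (fun N => ?_)
      show gn N x ∈ Metric.closedBall _ _
      rw [Metric.mem_closedBall, dist_zero_right]
      refine (hb N x 0).trans ?_
      rw [sub_zero]
      have : (N : ℝ)⁻¹ ≤ 1 := Nat.cast_inv_le_one N
      nlinarith)
    exact ⟨y, hy⟩
  choose L hL using hlim
  have hinv : Filter.Tendsto (fun N : ℕ => (N : ℝ)⁻¹) U (nhds 0) :=
    (tendsto_inv_atTop_nhds_zero_nat (𝕜 := ℝ)).mono_left hU
  have hLL : ∀ x y, ‖L x - L y‖ ≤ K * ‖x - y‖ := by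
    intro x y
    have h1 : Filter.Tendsto (fun N => ‖gn N x - gn N y‖) U (nhds ‖L x - L y‖) :=
      ((hL x).sub (hL y)).norm
    have h2 : Filter.Tendsto (fun N : ℕ => K * ‖x - y‖ + 2 * K * (N : ℝ)⁻¹) U
        (nhds (K * ‖x - y‖ + 2 * K * 0)) := (hinv.const_mul _).const_add _
    rw [mul_zero, add_zero] at h2
    refine le_of_tendsto_of_tendsto' h1 h2 (fun N => ?_)
    simp only [gn, sub_sub_sub_cancel_right]
    exact hb N x y
  have hLip2 : LipschitzWith ⟨K, hK⟩ L := by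
    apply LipschitzWith.of_dist_le_mul
    intro x y
    rw [dist_eq_norm, dist_eq_norm]
    exact hLL x y
  obtain ⟨p, hp⟩ := (hLip2.ae_differentiableAt (μ := MeasureTheory.volume)).exists
  obtain ⟨v, hv0, hv⟩ : ∃ v : Fin l → ℝ, v ≠ 0 ∧ fderiv ℝ L p v = 0 := by
    have := LinearMap.ker_ne_bot_of_finrank_lt
      (f := (fderiv ℝ L p : (Fin l → ℝ) →ₗ[ℝ] (Fin k → ℝ))) (by simpa using hkl)
    obtain ⟨v, hv, hv0⟩ := Submodule.exists_mem_ne_zero_of_ne_bot this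
    exact ⟨v, hv0, by simpa using hv⟩
  obtain ⟨w, hw1, hw⟩ : ∃ w : Fin l → ℝ, ‖w‖ = 1 ∧ fderiv ℝ L p w = 0 := by
    refine ⟨‖v‖⁻¹ • v, ?_, ?_⟩
    · rw [norm_smul, norm_inv, norm_norm, inv_mul_cancel₀ (norm_ne_zero_iff.2 hv0)]
    · rw [map_smul, hv, smul_zero]
  have hd := hp.hasFDerivAt.isLittleO
  have hd2 := hd.def (show (0 : ℝ) < ε / 3 by positivity)
  rw [Metric.eventually_nhds_iff] at hd2
  obtain ⟨r, hr, hd3⟩ := hd2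
  set δ := r / 2 with hδ
  have hδ0 : 0 < δ := by positivity
  have hMR : (0 : ℝ) < M := by exact_mod_cast hM
  let q : ℕ → (Fin l → ℝ) := fun j => p + ((j : ℝ) * δ / M) • w
  have hq0 : q 0 = p := by simp [q]
  have hqL : ∀ j ≤ M, ‖L (q j) - L p‖ ≤ ε / 3 * δ := by
    intro j hj
    have e : q j - p = ((j : ℝ) * δ / M) • w := by simp [q]
    have hjM : (j : ℝ) * δ / M ≤ δ := by
      rw [div_le_iff₀ hMR, mul_comm]
      gcongr
    have hn1 : ‖q j - p‖ ≤ δ := by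
      rw [e, norm_smul, hw1, mul_one, Real.norm_of_nonneg (by positivity)]
      exact hjM
    have := hd3 (y := q j) (by rw [dist_eq_norm]; linarith)
    rw [e, map_smul, hw, smul_zero, sub_zero, ← e] at this
    exact this.trans (by gcongr)
  have hev : ∀ᶠ N in (U : Filter ℕ), ∀ j ∈ Finset.range (M + 1), ‖gn N (q j) - L (q j)‖ ≤ ε / 3 * δ := by
    rw [Filter.eventually_all_finset]
    intro j _
    have h1 := (hL (q j)).eventually (Metric.closedBall_mem_nhds _ (show 0 < ε / 3 * δ by positivity))
    filter_upwards [h1] with N hN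
    rwa [dist_eq_norm] at hN
  have hev2 : ∀ᶠ N : ℕ in (U : Filter ℕ), 1 ≤ N ∧ R / δ ≤ (N : ℝ) :=
    hU ((Filter.eventually_ge_atTop 1).and
      (tendsto_natCast_atTop_atTop.eventually (Filter.eventually_ge_atTop (R / δ))))
  obtain ⟨N, hN1, hN2, hN3⟩ := (hev.and hev2).exists
  have hN : (0 : ℝ) < N := by exact_mod_cast hN2
  refine ⟨N * δ, (div_le_iff₀ hδ0).1 hN3, fun j => flr ((N : ℝ) • q j), ?_, ?_, ?_⟩
  · intro j _
    refine (flr_sub_le _ _).trans ?_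
    gcongr
    rw [← smul_sub, norm_smul, Real.norm_of_nonneg hN.le]
    have : q j - q (j + 1) = (-(δ / M)) • w := by
      simp only [q]
      rw [add_sub_add_left_eq_sub, ← sub_smul]
      congr 1
      push_cast; ring
    rw [this, norm_smul, hw1, mul_one, norm_neg, Real.norm_of_nonneg (by positivity)]
    apply le_of_eq; ring
  · refine le_trans ?_ (le_flr_sub _ _)
    rw [← smul_sub, norm_smul, Real.norm_of_nonneg hN.le]
    have : q 0 - q M = (-δ) • w := by
      rw [hq0]
      simp only [q]
      rw [sub_add_cancel_left, ← neg_smul]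
      congr 1
      field_simp
    rw [this, norm_smul, hw1, mul_one, norm_neg, Real.norm_of_nonneg (by positivity)]
  · intro j hj
    have h1 := hN1 j (by simp; omega)
    have h2 := hN1 0 (by simp)
    have h3 := hqL j hj
    have h4 : ‖hn N (q j) - hn N (q 0)‖ ≤ ε * δ := by
      have : hn N (q j) - hn N (q 0) = (gn N (q j) - L (q j)) - (gn N (q 0) - L (q 0)) +
        (L (q j) - L p) := by simp only [gn, hq0]; abel
      rw [this]
      refine (norm_add_le _ _).trans ?_
      have := norm_sub_le (gn N (q j) - L (q j)) (gn N (q 0) - L (q 0))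
      linarith
    have h5 : h (flr ((N : ℝ) • q j)) - h (flr ((N : ℝ) • q 0)) =
        (N : ℝ) • (hn N (q j) - hn N (q 0)) := by
      simp only [hn]
      rw [← smul_sub, smul_smul, mul_inv_cancel₀ hN.ne', one_smul]
    rw [h5, norm_smul, Real.norm_of_nonneg hN.le]
    calc (N : ℝ) * _ ≤ N * (ε * δ) := by gcongr
      _ = _ := by ring

end Analytic

section Final

theorem ht_lip {k : ℕ} (n : Fin k → ℕ) (g h : GammaGroup n) :
    ‖toR (ht n g) - toR (ht n h)‖ ≤ wordDist (stdGen n) g h := by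
  rw [pi_norm_le_iff_of_nonneg (wd_nonneg _ _ _)]
  intro i
  have hg : ∀ x ∈ stdGen n, |(ht n x i : ℝ)| ≤ 1 := by
    rintro x (rfl | ⟨j, rfl⟩)
    · rw [ht_B]; simp
    · rw [ht_A]
      by_cases hj : i = j
      · subst hj; simp
      · simp [hj]
  have := subadd_le_wd (stdGen n) (stdGen_closure n) (fun g => |(ht n g i : ℝ)|) 1
    (by simp [ht_one]) (fun x y => by
      rw [ht_mul]; simp only [Pi.add_apply]; push_cast; exact abs_add_le _ _)
    (by
      rintro x (hx | hx)
      · exact hg x hx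
      · have := hg _ hx
        rw [ht_inv] at this
        simpa using this) g h
  rw [ht_mul, ht_inv, one_mul] at this
  simp only [Pi.add_apply, Pi.neg_apply] at this
  push_cast at this
  rw [neg_add_eq_sub, abs_sub_comm] at this
  exact this

theorem no_flat {k l : ℕ} (n : Fin k → ℕ) (hn2 : ∀ i, 2 ≤ n i) (hk : 0 < k) (hkl : k < l)
    (F : (Fin l → ℤ) → GammaGroup n) (K : ℝ) (hK : 1 ≤ K)
    (hu : ∀ z w, wordDist (stdGen n) (F z) (F w) ≤ K * ‖toR z - toR w‖ + K)
    (hl : ∀ z w, ‖toR z - toR w‖ ≤ K * wordDist (stdGen n) (F z) (F w) + K) : False := by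
  obtain ⟨c, hc, hch⟩ := chain_bound n hn2 hk
  have hK0 : 0 < K := by linarith
  have hc0 : 0 < c := by linarith
  set ε := 1 / (4 * K * c) with hε
  have hε0 : 0 < ε := by positivity
  obtain ⟨M, hM⟩ := exists_nat_gt (4 * K * K * c)
  have hM0 : (0 : ℝ) < M := lt_trans (by positivity) hM
  have hM1 : 0 < M := by exact_mod_cast hM0
  set B := K * c * (M + 2 * K + 2) + K + 1 with hB
  have hB0 : 0 < B := by positivity
  obtain ⟨s, hs, z, hz1, hz2, hz3⟩ := analytic hkl (fun z => toR (ht n (F z))) K hK0.le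
    (fun z w => (ht_lip n _ _).trans (hu z w)) ε hε0 M hM1 (2 * B + 1)
  have hs0 : 0 < s := by linarith
  have h1 := hch M ⌈ε * s⌉₊ ⌈K * (s / M + 1) + K⌉₊ (fun j => F (z j))
    (fun j hj => by
      refine (hu _ _).trans (le_trans ?_ (Nat.le_ceil _))
      have := hz1 j hj
      gcongr)
    (fun j hj i => by
      have h2 := (norm_le_pi_norm _ i).trans ((hz3 j hj).trans (Nat.le_ceil _))
      simp only [Pi.sub_apply, toR, Real.norm_eq_abs] at h2
      exact_mod_cast h2)
  have h2 := hl (z 0) (z M)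
  have h3 := (Nat.ceil_lt_add_one (show 0 ≤ ε * s by positivity)).le
  have h4 := (Nat.ceil_lt_add_one (show 0 ≤ K * (s / M + 1) + K by positivity)).le
  have h5 : s ≤ K * (c * (M + (ε * s + 1) + (K * (s / M + 1) + K + 1))) + K + 1 := by
    calc s ≤ K * wordDist (stdGen n) (F (z 0)) (F (z M)) + K + 1 := by linarith
      _ ≤ _ := by
        gcongr
        refine h1.trans ?_
        gcongr
  have h6 : K * c * (ε * s) = s / 4 := by rw [hε]; field_simp
  have h7 : K * c * (K * (s / M)) ≤ s / 4 := by
    have : K * c * (K * (s / M)) = (K * K * c) * s / M := by ring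
    rw [this, div_le_iff₀ hM0]
    nlinarith
  have h8 : K * (c * (M + (ε * s + 1) + (K * (s / M + 1) + K + 1))) + K + 1 =
    K * c * (ε * s) + K * c * (K * (s / M)) + B := by rw [hB]; ring
  linarith

theorem addRight_pow_apply (r : ℕ) (x : ℚ) :
    ((Equiv.addRight (1 : ℚ) : Equiv.Perm ℚ) ^ r) x = x + r := by
  induction r with
  | zero => simp
  | succ r ih =>
    rw [pow_succ', Equiv.Perm.mul_apply, ih, Equiv.coe_addRight]
    push_cast; ring

theorem addRight_zpow_apply (r : ℤ) (x : ℚ) :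
    ((Equiv.addRight (1 : ℚ) : Equiv.Perm ℚ) ^ r) x = x + r := by
  obtain ⟨a, rfl | rfl⟩ := r.eq_nat_or_neg
  · rw [zpow_natCast, addRight_pow_apply]; simp
  · rw [zpow_neg, zpow_natCast, Equiv.Perm.inv_eq_iff_eq, addRight_pow_apply]; simp

theorem B_zpow_inj {l : ℕ} (m : Fin l → ℕ) (hm2 : ∀ i, 2 ≤ m i) :
    Function.Injective (fun t : ℤ => gammaB m ^ t) := by
  have hne : ∀ i, (m i : ℚ) ≠ 0 := fun i => by
    have := hm2 i
    exact_mod_cast (by omega)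
  obtain ⟨φ, -, hB⟩ := gamma_lift m (H := Equiv.Perm ℚ)
    (fun i => (Equiv.mulRight₀ (m i : ℚ) (hne i))⁻¹) (Equiv.addRight (1 : ℚ))
    (by
      intro i
      ext x
      rw [addRight_pow_apply]
      simp only [Equiv.symm_symm, Equiv.Perm.mul_apply, Equiv.coe_addRight, Equiv.mulRight₀_apply,
        Equiv.Perm.inv_def, Equiv.mulRight₀_symm_apply]
      have := hne i
      field_simp)
    (by
      intro i j
      rw [← mul_inv_rev, ← mul_inv_rev]
      congr 1
      ext x
      simp only [Equiv.Perm.mul_apply, Equiv.mulRight₀_apply]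
      ring)
  intro s t hst
  have h := congrArg φ hst
  simp only [map_zpow, hB] at h
  have h2 := congrArg (fun e : Equiv.Perm ℚ => e 0) h
  simp only [addRight_zpow_apply] at h2
  simpa using h2

theorem no_line {k l : ℕ} (n : Fin k → ℕ) (m : Fin l → ℕ) (hm2 : ∀ i, 2 ≤ m i) (hk : k = 0)
    (hl : 0 < l) (F : GammaGroup m → GammaGroup n)
    (h : QE (wordDist (stdGen m)) (wordDist (stdGen n)) F) : False := by
  subst hk
  obtain ⟨K, hK, hu, hlow⟩ := h
  have hcl := stdGen_closure m
  have hex : ∀ g : GammaGroup n, ∃ e : ℤ, gammaB n ^ e = g := by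
    intro g
    have h1 : stdGen n = {gammaB n} := by
      unfold stdGen
      rw [Set.range_eq_empty]; simp
    have h2 := stdGen_closure n
    rw [h1, ← Subgroup.zpowers_eq_closure] at h2
    have h3 : g ∈ Subgroup.zpowers (gammaB n) := by rw [h2]; trivial
    exact Subgroup.mem_zpowers_iff.1 h3
  choose e he using hex
  obtain ⟨ψ, -, hψ⟩ := gamma_lift n (H := Multiplicative ℤ) (fun i => i.elim0)
    (Multiplicative.ofAdd 1) (fun i => i.elim0) (fun i => i.elim0)
  have hψe : ∀ g, (ψ g).toAdd = e g := by
    intro g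
    conv_lhs => rw [← he g]
    rw [map_zpow, hψ]; simp
  have hdist : ∀ g h, |((e h - e g : ℤ) : ℝ)| ≤ wordDist (stdGen n) g h := by
    intro g h
    have := subadd_le_wd (stdGen n) (stdGen_closure n) (fun g => |((ψ g).toAdd : ℝ)|) 1
      (by simp) (fun x y => by
        rw [map_mul, toAdd_mul]; push_cast; exact abs_add_le _ _)
      (by
        have hg : ∀ x ∈ stdGen n, |((ψ x).toAdd : ℝ)| ≤ 1 := by
          rintro x (rfl | ⟨j, rfl⟩)
          · rw [hψ]; simp
          · exact j.elim0
        rintro x (hx | hx)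
        · exact hg x hx
        · have := hg _ hx
          simpa using this) g h
    rw [one_mul, map_mul, map_inv, toAdd_mul, toAdd_inv, hψe, hψe, neg_add_eq_sub] at this
    exact this
  obtain ⟨Q, hQ⟩ : ∃ Q : ℕ, ∀ t : ℤ, wordDist (stdGen m) 1 (gammaB m ^ t) ≤ K → |t| < Q := by
    have h1 := (ball_finite (stdGen m) (stdGen_finite m) hcl K).preimage
      ((B_zpow_inj m hm2).injOn)
    obtain ⟨Q, hQ⟩ := (h1.image (fun t => |t|)).bddAbove
    refine ⟨Q.toNat + 1, fun t ht => ?_⟩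
    have := hQ ⟨t, ht, rfl⟩
    simp only at this
    push_cast
    omega
  let i0 : Fin l := ⟨0, hl⟩
  let x : ℕ → GammaGroup m := fun t => gammaB m ^ (t * Q)
  have hx : ∀ j t, t < 2 ^ j → wordDist (stdGen m) (x 0) (x t) ≤ (j + Q : ℕ) * (m i0 + 2) := by
    intro j t ht
    have : x 0 = 1 := by simp [x]
    rw [this]
    apply wl_B_pow m hm2 i0
    rw [pow_add]
    exact Nat.mul_lt_mul'' ht Nat.lt_two_pow_self
  obtain ⟨c, hc⟩ := exists_nat_gt (2 * (K * ((1 + Q) * (m i0 + 2)) + K + 1) + 1)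
  have hK0 : 0 < K := by linarith
  have hc1 : 1 ≤ c := by
    have h0 : (0 : ℝ) < c := lt_trans (by positivity) hc
    exact_mod_cast h0
  set j := 4 * c with hj
  have hj2 : c * j < 2 ^ j := by
    have h1 : 2 * c < 2 ^ (2 * c) := Nat.lt_two_pow_self
    have h2 : 2 ^ j = 2 ^ (2 * c) * 2 ^ (2 * c) := by rw [← pow_add]; congr 1; omega
    rw [h2]
    nlinarith
  set E := ⌈K * ((j + Q) * (m i0 + 2)) + K⌉₊ with hE
  have hj1 : (1 : ℝ) ≤ j := by exact_mod_cast (by omega)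
  have hEb : 2 * E + 1 < 2 ^ j := by
    have h1 := (Nat.ceil_lt_add_one (show 0 ≤ K * ((j + Q : ℝ) * (m i0 + 2)) + K by positivity)).le
    have h3 : (2 * E + 1 : ℝ) ≤ c * j := by
      calc (2 * E + 1 : ℝ) ≤ 2 * (K * ((j + Q : ℝ) * (m i0 + 2)) + K + 1) + 1 := by
            rw [hE]; linarith
        _ ≤ 2 * (K * ((j + Q * j : ℝ) * (m i0 + 2)) + K * j + j) + j := by
            gcongr
            · exact le_mul_of_one_le_right (by positivity) hj1
            · exact le_mul_of_one_le_right (by positivity) hj1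
        _ = (2 * (K * ((1 + Q) * (m i0 + 2)) + K + 1) + 1) * j := by ring
        _ ≤ _ := by gcongr
    have h4 : 2 * E + 1 ≤ c * j := by exact_mod_cast h3
    omega
  obtain ⟨s, hs, t, ht, hst, heq⟩ := Finset.exists_ne_map_eq_of_card_lt_of_maps_to
    (s := Finset.range (2 ^ j)) (t := Finset.Icc (-(E : ℤ)) E)
    (f := fun t => e (F (x t)) - e (F (x 0))) (by
      rw [Finset.card_range, Int.card_Icc]; omega)
    (by
      intro t ht
      have ht' : t < 2 ^ j := by simpa using ht
      simp only [Finset.coe_Icc, Set.mem_Icc]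
      rw [← abs_le]
      have h1 := (hdist _ _).trans (hu (x 0) (x t))
      have h2 := hx j t ht'
      have h3 : |((e (F (x t)) - e (F (x 0)) : ℤ) : ℝ)| ≤ E := by
        refine h1.trans (le_trans ?_ (Nat.le_ceil _))
        push_cast at h2
        gcongr
      exact_mod_cast h3)
  have heq2 : F (x s) = F (x t) := by
    rw [← he (F (x s)), ← he (F (x t))]
    congr 1
    linarith
  have h1 := hlow (x s) (x t)
  rw [heq2, wd_self, mul_zero, zero_add, wd_one] at h1
  have h2 : (x s)⁻¹ * x t = gammaB m ^ (((t : ℤ) - s) * Q) := by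
    simp only [x]
    rw [sub_mul, sub_eq_neg_add, zpow_add, zpow_neg]
    norm_cast
  rw [h2] at h1
  have h3 := hQ _ h1
  rw [abs_mul, Nat.abs_cast] at h3
  have h4 : (1 : ℤ) ≤ |(t : ℤ) - s| := Int.one_le_abs (by
    intro h0
    apply hst
    omega)
  have h5 : (0 : ℤ) ≤ Q := by positivity
  nlinarith

theorem no_QE {k l : ℕ} (n : Fin k → ℕ) (m : Fin l → ℕ) (hn2 : ∀ i, 2 ≤ n i) (hm2 : ∀ i, 2 ≤ m i)
    (hkl : k < l) (F : GammaGroup m → GammaGroup n)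
    (h : QE (wordDist (stdGen m)) (wordDist (stdGen n)) F) : False := by
  rcases Nat.eq_zero_or_pos k with hk | hk
  · exact no_line n m hm2 hk (by omega) F h
  obtain ⟨K, hK, hu, hl⟩ := h
  have hl1 : (1 : ℝ) ≤ l := by exact_mod_cast (by omega)
  refine no_flat n hn2 hk hkl (fun z => F (al m z)) (K * l) (by nlinarith) ?_ ?_
  · intro z w
    refine (hu _ _).trans ?_
    have h1 : wordDist (stdGen m) (al m z) (al m w) ≤ l * ‖toR z - toR w‖ := by
      rw [wd_one, ← al_neg, ← al_add]
      refine (wl_al m _).trans ?_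
      calc _ ≤ ∑ i : Fin l, ‖toR z - toR w‖ := by
            apply Finset.sum_le_sum
            intro i _
            refine le_trans (le_of_eq ?_) (norm_le_pi_norm (toR z - toR w) i)
            simp only [Pi.sub_apply, Pi.add_apply, Pi.neg_apply, toR, Real.norm_eq_abs]
            push_cast
            rw [neg_add_eq_sub, abs_sub_comm]
        _ = _ := by simp
    calc _ ≤ K * (l * ‖toR z - toR w‖) + K * l := by
          gcongr
          exact le_mul_of_one_le_right (by linarith) hl1
      _ = _ := by ring
  · intro z w
    have h1 := ht_lip m (al m z) (al m w)
    rw [ht_al, ht_al] at h1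
    refine h1.trans ((hl _ _).trans ?_)
    have h2 : K ≤ K * l := le_mul_of_one_le_right (by linarith) hl1
    have := wd_nonneg (stdGen n) (F (al m z)) (F (al m w))
    gcongr

end Final

/-- If `Γ(S₁)` and `Γ(S₂)` are quasi-isometric, where `S₁ = (n₁,…,n_k)` and
`S₂ = (m₁,…,m_l)` are tuples of pairwise coprime integers at least 2, then
`k = l`. -/
theorem gammaGroup_quasiIsometry_same_length
    {k l : ℕ} (n : Fin k → ℕ) (m : Fin l → ℕ)
    (hn2 : ∀ i, 2 ≤ n i) (hm2 : ∀ j, 2 ≤ m j)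
    (hncop : ∀ i j, i ≠ j → Nat.Coprime (n i) (n j))
    (hmcop : ∀ i j, i ≠ j → Nat.Coprime (m i) (m j))
    (hqi : QuasiIsometricGroups (GammaGroup n) (GammaGroup m)) :
    k = l := by
  obtain ⟨S, T, hS, hT, K, C, f, hK, -, hf⟩ := hqi
  have hSn := stdGen_closure n
  have hTm := stdGen_closure m
  rcases lt_trichotomy k l with h | h | h
  · exfalso
    obtain ⟨g, hg⟩ := QE_inv_of_QI hT hK hf
    exact no_QE n m hn2 hm2 h g (QE_change T.finite_toSet (stdGen_finite m) S.finite_toSet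
      (stdGen_finite n) hT hTm hS hSn g hg)
  · exact h
  · exfalso
    exact no_QE m n hm2 hn2 h f (QE_change S.finite_toSet (stdGen_finite n) T.finite_toSet
      (stdGen_finite m) hS hSn hT hTm f (QE_of_QI hK hf))
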